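/- For every r > 0 one has B̂(∞, r) = X̂ \ B̄(a, 1/r − 1), where B̄(a, ρ) = {y ∈ X : d(y,a) ≤ ρ} (which is empty when ρ < 0). -/

import Mathlib

open Metric Set MeasureTheory Filter
open scoped ENNReal NNReal

noncomputable section

variable {X : Type*}

/-- The quasimetric `d_a` on the sphericalization `X̂ = X ∪ {∞}`, with `none` playing
the role of the point `∞`. -/
noncomputable def sphDist [MetricSpace X] (a : X) : Option X → Option X → ℝ
  | some x, some y => dist x y / ((1 + dist x a) * (1 + dist y a))
  | some x, none => 1 / (1 + dist x a)
  | none, some y => 1 / (1 + dist y a)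
  | none, none => 0

/-- The sum `Σ_{j=1}^k d_a(x_{j-1}, x_j)` along a finite sequence (list) in `X̂`. -/
noncomputable def chainSum [MetricSpace X] (a : X) : List (Option X) → ℝ
  | [] => 0
  | [_] => 0
  | x :: y :: l => sphDist a x y + chainSum a (y :: l)

/-- The sphericalized distance `d̂(x,y) = inf Σ_{j=1}^k d_a(x_{j-1},x_j)`, the infimum
being taken over all finite sequences `x = x_0, x_1, …, x_k = y` in `X̂`. -/
noncomputable def sphHatDist [MetricSpace X] (a : X) (x y : Option X) : ℝ :=
  sInf {s : ℝ | ∃ L : List (Option X),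
    L.head? = some x ∧ L.getLast? = some y ∧ chainSum a L = s}

/-- `d̂(x) = d̂(x,∞) = 1/(1+|x|)` for `x ∈ X`. -/
noncomputable def sphD [MetricSpace X] (a x : X) : ℝ := 1 / (1 + dist x a)

/-!
The function `d_a(∞, ·)`, which is `x ↦ 1 / (1 + |x|)` on `X`, is `1`-Lipschitz for the quasimetric
`d_a`, since `1 / (1 + |y|) - 1 / (1 + |x|) = (|x| - |y|) / ((1 + |x|) (1 + |y|))`. Lipschitz bounds
add up along chains, so no chain from `∞` to `y` is shorter than the direct step; hence
`d̂(∞, ·) = d_a(∞, ·)`, whose sublevel sets are complements of balls centred at `a`.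
-/

section Sphericalization

variable [MetricSpace X] (a : X)

lemma sphDist_nonneg (x y : Option X) : 0 ≤ sphDist a x y := by
  cases x <;> cases y <;> simp only [sphDist] <;> positivity

lemma sphDist_none_some_sub (x y : X) :
    sphDist a none (some y) - sphDist a none (some x) =
      (dist x a - dist y a) / ((1 + dist x a) * (1 + dist y a)) := by
  have hx : 1 + dist x a ≠ 0 := by positivity
  have hy : 1 + dist y a ≠ 0 := by positivity
  simp only [sphDist]
  field_simp
  ring

lemma sphDist_none_triangle (x y : Option X) :
    sphDist a none y ≤ sphDist a none x + sphDist a x y := by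
  match x, y with
  | none, _ => simp [sphDist]
  | some x, none => exact add_nonneg (sphDist_nonneg a _ _) (sphDist_nonneg a _ _)
  | some x, some y =>
    have htri : dist x a - dist y a ≤ dist x y := sub_le_iff_le_add.2 (dist_triangle x y a)
    rw [← sub_le_iff_le_add', sphDist_none_some_sub, sphDist]
    gcongr

variable {a} {f : Option X → ℝ}

lemma le_add_chainSum_of_le_add_sphDist (hf : ∀ x y, f y ≤ f x + sphDist a x y)
    {L : List (Option X)} {x y : Option X}
    (hhead : L.head? = some x) (hlast : L.getLast? = some y) :
    f y ≤ f x + chainSum a L := by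
  induction L generalizing x with
  | nil => simp at hhead
  | cons z l ih =>
    obtain rfl : z = x := by simpa using hhead
    cases l with
    | nil =>
      obtain rfl : z = y := by simpa using hlast
      simp [chainSum]
    | cons w l =>
      calc f y ≤ f w + chainSum a (w :: l) := ih rfl (by simpa using hlast)
        _ ≤ f z + sphDist a z w + chainSum a (w :: l) := by gcongr; exact hf z w
        _ = f z + chainSum a (z :: w :: l) := by rw [chainSum, add_assoc]

lemma le_add_sphHatDist_of_le_add_sphDist (hf : ∀ x y, f y ≤ f x + sphDist a x y) (x y : Option X) :
    f y ≤ f x + sphHatDist a x y := by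
  rw [← sub_le_iff_le_add']
  refine le_csInf ⟨_, [x, y], rfl, rfl, rfl⟩ ?_
  rintro _ ⟨L, hhead, hlast, rfl⟩
  exact sub_le_iff_le_add'.2 (le_add_chainSum_of_le_add_sphDist hf hhead hlast)

variable (a)

lemma sphHatDist_le_sphDist (x y : Option X) : sphHatDist a x y ≤ sphDist a x y := by
  refine csInf_le ⟨0, ?_⟩ ⟨[x, y], rfl, rfl, by simp only [chainSum, add_zero]⟩
  rintro _ ⟨L, hhead, hlast, rfl⟩
  -- A chain has nonnegative length because constant functions are `1`-Lipschitz for `d_a`.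
  simpa only [zero_add] using le_add_chainSum_of_le_add_sphDist (f := fun _ ↦ 0)
    (fun x y ↦ by simpa only [zero_add] using sphDist_nonneg a x y) hhead hlast

lemma sphHatDist_none_left (y : Option X) : sphHatDist a none y = sphDist a none y :=
  (sphHatDist_le_sphDist a none y).antisymm <| by
    simpa [sphDist] using le_add_sphHatDist_of_le_add_sphDist (sphDist_none_triangle a) none y

lemma sphDist_none_some_lt_iff {r : ℝ} (hr : 0 < r) (x : X) :
    sphDist a none (some x) < r ↔ x ∉ closedBall a (1 / r - 1) := by
  rw [sphDist, one_div_lt (by positivity) hr, mem_closedBall, not_le, sub_lt_iff_lt_add']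

end Sphericalization

theorem statement6_general [MetricSpace X] (a : X) {r : ℝ} (hr : 0 < r) :
    {y : Option X | sphHatDist a none y < r} =
      Set.univ \ (Option.some '' Metric.closedBall a (1 / r - 1)) := by
  ext y
  rw [mem_ofPred_eq, sphHatDist_none_left]
  cases y with
  | none => simpa [sphDist] using hr
  | some x => simpa using sphDist_none_some_lt_iff a hr x

/-- For every `r > 0` one has
`B̂(∞, r) = X̂ \ B̄(a, 1/r − 1)`, where `B̄(a,ρ) = {y ∈ X : d(y,a) ≤ ρ}`
(empty when `ρ < 0`). -/
theorem statement6 [MetricSpace X]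
    (hX : ¬ Bornology.IsBounded (Set.univ : Set X)) (a : X)
    (r : ℝ) (hr : 0 < r) :
    {y : Option X | sphHatDist a none y < r} =
      Set.univ \ (Option.some '' Metric.closedBall a (1 / r - 1)) :=
  statement6_general a hr
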